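/- For every t < ω, the triple (S_t^<(ω;ω), ≤, r) is a topological Ramsey space. -/

import Mathlib

open Topology

section Ellentuck

variable {R α : Type*}

/-- The basic set `[a,A] = {B ∈ R : B ≤ A and r_n(B) = a for some n}` of the
Ellentuck topology determined by a quasi-order `le` and approximation
mappings `r`. -/
def EllSet (le : R → R → Prop) (r : ℕ → R → α) (a : α) (A : R) : Set R :=
  {B | le B A ∧ ∃ n, r n B = a}

/-- The Ellentuck topology on `R`, generated by the basic sets `[a,A]`. -/
def EllTop (le : R → R → Prop) (r : ℕ → R → α) : TopologicalSpace R :=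
  TopologicalSpace.generateFrom {s | ∃ a A, s = EllSet le r a A}

/-- A set `S ⊆ R` is Ramsey: for every nonempty `[a,A]` there is `B ∈ [a,A]`
with `[a,B] ⊆ S` or `[a,B] ∩ S = ∅`. -/
def IsRamseySet (le : R → R → Prop) (r : ℕ → R → α) (S : Set R) : Prop :=
  ∀ (a : α) (A : R), (EllSet le r a A).Nonempty →
    ∃ B ∈ EllSet le r a A, EllSet le r a B ⊆ S ∨ EllSet le r a B ∩ S = ∅

/-- A set `S ⊆ R` is Ramsey null: for every nonempty `[a,A]` there is
`B ∈ [a,A]` with `[a,B] ∩ S = ∅`. -/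
def IsRamseyNullSet (le : R → R → Prop) (r : ℕ → R → α) (S : Set R) : Prop :=
  ∀ (a : α) (A : R), (EllSet le r a A).Nonempty →
    ∃ B ∈ EllSet le r a A, EllSet le r a B ∩ S = ∅

/-- A set has the property of Baire with respect to a topology `t`: it is the
symmetric difference of a `t`-open set and a `t`-meager set. -/
def HasPropertyOfBaire (t : TopologicalSpace R) (S : Set R) : Prop :=
  ∃ U M : Set R, IsOpen[t] U ∧ @IsMeagre R t M ∧ S = symmDiff U M

/-- `(R, ≤, r)` is a topological Ramsey space: every subset of `R` with the
property of Baire in the Ellentuck topology is Ramsey, and every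
Ellentuck-meager subset is Ramsey null. -/
def IsTopRamseySpace (le : R → R → Prop) (r : ℕ → R → α) : Prop :=
  (∀ S : Set R, HasPropertyOfBaire (EllTop le r) S → IsRamseySet le r S) ∧
  (∀ S : Set R, @IsMeagre R (EllTop le r) S → IsRamseyNullSet le r S)

end Ellentuck

/-- The space `S_t(ω;ω)` of parameter words: surjections `A : t+ω → t+ω`
which are the identity below `t` and whose classes are ordered by their
minima (`min A^{-1}({j}) < min A^{-1}({j'})` for `j < j'`). -/
def St (t : ℕ) : Set (ℕ → ℕ) :=
  {A | (∀ j, ∃ i, A i = j) ∧ (∀ i < t, A i = i) ∧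
       ∀ j j', j < j' → ∃ i, A i = j ∧ ∀ i', A i' = j' → i < i'}

/-- The space `S_t(ω;k)`: surjections `A : t+ω → t+k` which are the identity
below `t` and whose classes are ordered by their minima. -/
def StK (t k : ℕ) : Set (ℕ → ℕ) :=
  {A | (∀ i, A i < t + k) ∧ (∀ j < t + k, ∃ i, A i = j) ∧ (∀ i < t, A i = i) ∧
       ∀ j j', j < j' → j' < t + k → ∃ i, A i = j ∧ ∀ i', A i' = j' → i < i'}

/-- The composition `(A·B)(i) = B(A(i))`. -/
def compP (A B : ℕ → ℕ) : ℕ → ℕ := fun i => B (A i)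

/-- The approximation map: `r(0,A) = ∅` and, for `n > 0`, `r(n,A)` is the
restriction of `A` to the initial segment `{0, …, min A^{-1}({t+n}) − 1}`. -/
noncomputable def rP (t : ℕ) (n : ℕ) (A : ℕ → ℕ) : List ℕ :=
  if n = 0 then [] else List.ofFn fun i : Fin (sInf {i | A i = t + n}) => A i

/-- The space `S_t^<(ω;ω)` of ascending parameter words: elements of
`S_t(ω;ω)` whose classes `A^{-1}({t+j})` are finite and occur in successive
blocks (`max A^{-1}({t+i}) < min A^{-1}({t+j})` for `i < j`). -/
def StLt (t : ℕ) : Set (ℕ → ℕ) :=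
  {A | A ∈ St t ∧ (∀ j, {i | A i = t + j}.Finite) ∧
       ∀ j j', j < j' → ∀ i i', A i = t + j → A i' = t + j' → i < i'}

/-- The space `S_t^<(ω;k)`: elements of `S_t(ω;k)` whose classes
`A^{-1}({t+j})`, `j < k`, are finite and occur in successive blocks. -/
def StLtK (t k : ℕ) : Set (ℕ → ℕ) :=
  {A | A ∈ StK t k ∧ (∀ j < k, {i | A i = t + j}.Finite) ∧
       ∀ j j', j < j' → j' < k → ∀ i i', A i = t + j → A i' = t + j' → i < i'}

/-!
Under `A * B = A·B` the space is a monoid, filtered by the submonoids `fixing t j` of words which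
are the identity below `t + j`, and the nonempty basic sets are the orbits `A * fixing t j`. In any
monoid with such a filtration, the Galvin–Prikry argument with accepted and rejected elements proves
Ellentuck's theorem from two properties: countably many dense requirements can be met by a single
element (diagonalization), and colourings of one-step extensions are constant on an orbit
(pigeonhole).

Diagonalization is a fusion: infinite products of words from the successive `fixing t m` converge,
and only finitely many approximations end at a given position. The colourings in the pigeonhole
principle depend on the values before the first occurrence of `t + j`, and these form a word over
the letters below `t` and one variable. The required statement about infinite sequences of variable
words follows from idempotent ultrafilters `v ≤ u` on the free monoid, with `u` minimal among those
concentrating on constant words and `v` concentrating on variable words: every substitution of a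
letter for the variable maps `v` to `u`.
-/

section AbstractRamsey

variable {M : Type*} [Monoid M]

/-- The order `A ≤ B ↔ ∃ C, A = B * C` of a space of parameter words, on an arbitrary monoid. -/
abbrev IsRightMultiple (A B : M) : Prop := B ∣ A

/-- Dense open properties in the sense of forcing: `R` is preserved by right multiplication with
elements of `H`, and every `D` has a multiple `D * h` with `h ∈ H` satisfying `R`. -/
structure IsDenseOpen (H : Submonoid M) (R : M → Prop) : Prop where
  mul_right : ∀ D, R D → ∀ h ∈ H, R (D * h)
  exists_mul : ∀ D, ∃ h ∈ H, R (D * h)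

theorem IsDenseOpen.forall_mem_of_finite {ι : Type*} {H : Submonoid M} {R : ι → M → Prop}
    {s : Set ι} (hs : s.Finite) (hR : ∀ i ∈ s, IsDenseOpen H (R i)) :
    IsDenseOpen H fun D => ∀ i ∈ s, R i D := by
  refine ⟨fun D hD h hh i hi => (hR i hi).mul_right D (hD i hi) h hh, fun D => ?_⟩
  induction s, hs using Set.Finite.induction_on with
  | empty => exact ⟨1, one_mem H, by simp⟩
  | @insert i s _ _ ih =>
    obtain ⟨h, hh, hs⟩ := ih fun i hi => hR i (Set.mem_insert_of_mem _ hi)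
    obtain ⟨h', hh', hi⟩ := (hR i (Set.mem_insert i s)).exists_mul (D * h)
    refine ⟨h * h', mul_mem hh hh', Set.forall_mem_insert.mpr ?_⟩
    simp only [← mul_assoc]
    exact ⟨hi, fun l hl => (hR l (Set.mem_insert_of_mem _ hl)).mul_right _ (hs l hl) h' hh'⟩

/-- A sequence of submonoids along which any dense open properties `Φ j`, `j ≥ k`, can be made to
hold simultaneously for all multiples of a single element of `G k`. -/
def Diagonalizes (G : ℕ → Submonoid M) : Prop :=
  ∀ (Φ : ℕ → M → Prop) (k : ℕ), (∀ j ≥ k, IsDenseOpen (G j) (Φ j)) →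
    ∃ g ∈ G k, ∀ C, ∀ j ≥ k, Φ j (g * C)

/-- The pigeonhole principle for two-colourings of `G j` which are invariant under right
multiplication by `G (j + 1)`, that is, for colourings of one-step extensions. -/
def HasPigeonhole (G : ℕ → Submonoid M) : Prop :=
  ∀ (j : ℕ) (S : Set M), (∀ C ∈ G j, ∀ h ∈ G (j + 1), (C ∈ S ↔ C * h ∈ S)) →
    ∃ h ∈ G j, (∀ C ∈ G j, h * C ∈ S) ∨ (∀ C ∈ G j, h * C ∉ S)

/-- The Ramsey property of a set, with the orbits `D * G k` in the role of the basic sets. -/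
def IsRamseyFor (G : ℕ → Submonoid M) (S : Set M) : Prop :=
  ∀ D k, ∃ g ∈ G k, (∀ C ∈ G k, D * g * C ∈ S) ∨ (∀ C ∈ G k, D * g * C ∉ S)

/-- Ramsey null sets, with the orbits `D * G k` in the role of the basic sets. -/
def IsNullFor (G : ℕ → Submonoid M) (N : Set M) : Prop :=
  ∀ D k, ∃ g ∈ G k, ∀ C ∈ G k, D * g * C ∉ N

/-- Galvin and Prikry's notion of acceptance: the whole orbit `C * G j` lies in `U`. -/
def Accepts (G : ℕ → Submonoid M) (U : Set M) (j : ℕ) (C : M) : Prop :=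
  ∀ h ∈ G j, C * h ∈ U

/-- Galvin and Prikry's notion of rejection: no element of the orbit `C * G j` is accepted. -/
def Rejects (G : ℕ → Submonoid M) (U : Set M) (j : ℕ) (C : M) : Prop :=
  ∀ h ∈ G j, ¬ Accepts G U j (C * h)

variable {G : ℕ → Submonoid M} {S U N : Set M} {j k : ℕ} {C D g h : M}

theorem Accepts.mul (hC : Accepts G U j C) (hh : h ∈ G j) : Accepts G U j (C * h) :=
  fun h' hh' => mul_assoc C h h' ▸ hC (h * h') (mul_mem hh hh')

theorem Rejects.mul (hC : Rejects G U j C) (hh : h ∈ G j) : Rejects G U j (C * h) :=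
  fun h' hh' => mul_assoc C h h' ▸ hC (h * h') (mul_mem hh hh')

theorem Rejects.not_accepts (hC : Rejects G U j C) : ¬ Accepts G U j C := fun h =>
  hC 1 (one_mem _) (h.mul (one_mem _))

theorem isDenseOpen_accepts_or_rejects (G : ℕ → Submonoid M) (U : Set M) (j : ℕ) :
    IsDenseOpen (G j) fun C => Accepts G U j C ∨ Rejects G U j C where
  mul_right _ hC _ hh := hC.imp (·.mul hh) (·.mul hh)
  exists_mul C := by
    by_cases hC : Rejects G U j C
    · exact ⟨1, one_mem _, Or.inr (hC.mul (one_mem _))⟩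
    · simp only [Rejects, not_forall, not_not] at hC
      obtain ⟨h, hh, hacc⟩ := hC
      exact ⟨h, hh, Or.inl hacc⟩

theorem HasPigeonhole.exists_rejects_succ (hG : HasPigeonhole G) (hC : Rejects G U j C)
    (hdec : ∀ X, Accepts G U (j + 1) (C * X) ∨ Rejects G U (j + 1) (C * X)) :
    ∃ h ∈ G j, ∀ X ∈ G j, Rejects G U (j + 1) (C * h * X) := by
  have invariant : ∀ X ∈ G j, ∀ y ∈ G (j + 1),
      (X ∈ {X | Accepts G U (j + 1) (C * X)} ↔ X * y ∈ {X | Accepts G U (j + 1) (C * X)}) := by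
    intro X _ y hy
    simp only [Set.mem_ofPred_eq, ← mul_assoc]
    exact ⟨fun hacc => hacc.mul hy, fun hacc => (hdec X).resolve_right fun hrej => hrej y hy hacc⟩
  obtain ⟨h, hh, hacc | hnot⟩ := hG j _ invariant
  · refine absurd (fun X hX => ?_) (hC h hh)
    simpa only [mul_assoc, mul_one] using hacc X hX 1 (one_mem _)
  · refine ⟨h, hh, fun X hX => ?_⟩
    rw [mul_assoc]
    exact (hdec (h * X)).resolve_left (hnot X hX)

theorem HasPigeonhole.isDenseOpen_accepts_or_rejects_succ (hG : HasPigeonhole G)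
    (hdec : ∀ C, ∀ i ≥ j, Accepts G U i (g * C) ∨ Rejects G U i (g * C)) :
    IsDenseOpen (G j) fun C =>
      Accepts G U j (g * C) ∨ ∀ X ∈ G j, Rejects G U (j + 1) (g * C * X) where
  mul_right C hC h hh := hC.imp (fun hacc => mul_assoc g C h ▸ hacc.mul hh) fun hrej X hX => by
    simpa only [mul_assoc] using hrej (h * X) (mul_mem hh hX)
  exists_mul C := by
    rcases hdec C j le_rfl with hacc | hrej
    · exact ⟨1, one_mem _, Or.inl (by rwa [mul_one])⟩
    · obtain ⟨h, hh, H⟩ := hG.exists_rejects_succ hrej fun X => by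
        simpa only [mul_assoc] using hdec (C * X) (j + 1) j.le_succ
      exact ⟨h, hh, Or.inr (by simpa only [mul_assoc] using H)⟩

theorem Diagonalizes.exists_accepts_or_forall_rejects (hD : Diagonalizes G)
    (hP : HasPigeonhole G) (U : Set M) (k : ℕ) :
    ∃ g ∈ G k, Accepts G U k g ∨ ∀ C ∈ G k, ∀ j ≥ k, Rejects G U j (g * C) := by
  obtain ⟨g, hg, hdec⟩ := hD _ k fun j _ => isDenseOpen_accepts_or_rejects G U j
  rcases hdec 1 k le_rfl with hacc | hrej
  · exact ⟨g, hg, Or.inl (by rwa [mul_one] at hacc)⟩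
  obtain ⟨g', hg', hsucc⟩ := hD _ k fun j hj =>
    hP.isDenseOpen_accepts_or_rejects_succ fun C i hi => hdec C i (hj.trans hi)
  refine ⟨g * g', mul_mem hg hg', Or.inr fun C hC j hj => ?_⟩
  rw [mul_assoc]
  induction j, hj using Nat.le_induction with
  | base => exact (mul_one g ▸ hrej).mul (mul_mem hg' hC)
  | succ j hj ih =>
    simpa only [mul_one] using (hsucc C j hj).resolve_left ih.not_accepts 1 (one_mem _)

/-- A rejected set contains no `g * C`: it would contain an orbit `g * C * G j` by openness. -/
theorem Diagonalizes.isRamseyFor_of_isOpen (hD : Diagonalizes G) (hP : HasPigeonhole G)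
    (hU : ∀ D ∈ U, ∀ k, ∃ j ≥ k, Accepts G U j D) : IsRamseyFor G U := by
  intro D k
  obtain ⟨g, hg, hacc | hrej⟩ := hD.exists_accepts_or_forall_rejects hP ((D * ·) ⁻¹' U) k
  · exact ⟨g, hg, Or.inl fun C hC => mul_assoc D g C ▸ hacc C hC⟩
  · refine ⟨g, hg, Or.inr fun C hC hmem => ?_⟩
    obtain ⟨j, hj, hsub⟩ := hU _ hmem k
    refine (hrej C hC j hj).not_accepts fun h hh => ?_
    simpa only [Set.mem_preimage, mul_assoc] using hsub h hh

theorem IsNullFor.isDenseOpen (hN : IsNullFor G N) (k : ℕ) :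
    IsDenseOpen (G k) fun D => ∀ C ∈ G k, D * C ∉ N where
  mul_right D hD h hh C hC := mul_assoc D h C ▸ hD (h * C) (mul_mem hh hC)
  exists_mul D := hN D k

theorem IsDenseOpen.comp_mul_left {H : Submonoid M} {R : M → Prop} (hR : IsDenseOpen H R)
    (D : M) : IsDenseOpen H fun C => R (D * C) where
  mul_right C hC h hh := mul_assoc D C h ▸ hR.mul_right _ hC h hh
  exists_mul C := by simpa only [mul_assoc] using hR.exists_mul (D * C)

theorem Diagonalizes.isNullFor_iUnion (hD : Diagonalizes G) {N : ℕ → Set M}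
    (hN : ∀ n, IsNullFor G (N n)) : IsNullFor G (⋃ n, N n) := by
  intro D k
  obtain ⟨g, hg, hnull⟩ := hD (fun j C => ∀ n ∈ Set.Iic j, ∀ X ∈ G j, D * C * X ∉ N n) k
    fun j _ => .forall_mem_of_finite (Set.finite_Iic j)
      fun n _ => ((hN n).isDenseOpen j).comp_mul_left D
  refine ⟨g, hg, fun C _ hmem => ?_⟩
  obtain ⟨n, hn⟩ := Set.mem_iUnion.mp hmem
  refine hnull C (max n k) (le_max_right _ _) n (Set.mem_Iic.mpr (le_max_left _ _)) 1
    (one_mem _) ?_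
  rwa [mul_one, ← mul_assoc]

theorem IsNullFor.mono (hN : IsNullFor G N) (h : S ⊆ N) : IsNullFor G S := fun D k =>
  (hN D k).imp fun _ hg => ⟨hg.1, fun C hC hmem => hg.2 C hC (h hmem)⟩

theorem IsRamseyFor.symmDiff (hU : IsRamseyFor G U) (hN : IsNullFor G N) :
    IsRamseyFor G (symmDiff U N) := by
  intro D k
  obtain ⟨g, hg, hgU⟩ := hU D k
  obtain ⟨g', hg', hnull⟩ := hN (D * g) k
  refine ⟨g * g', mul_mem hg hg', ?_⟩
  simp only [← mul_assoc]
  refine hgU.imp (fun hin C hC => Or.inl ⟨?_, hnull C hC⟩) fun hout C hC => ?_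
  · simpa only [mul_assoc] using hin (g' * C) (mul_mem hg' hC)
  · rintro (⟨hmem, -⟩ | ⟨hmem, -⟩)
    · exact hout (g' * C) (mul_mem hg' hC) (by simpa only [mul_assoc] using hmem)
    · exact hnull C hC hmem

/-- The approximation map `r` is adapted to the decreasing submonoids `G`: the elements of the
basic set `[r n A, A]` are the products `A * C` with `C ∈ G (stage n)`. -/
structure IsAdapted {α : Type*} (G : ℕ → Submonoid M) (r : ℕ → M → α) (stage : ℕ → ℕ) :
    Prop where
  antitone : Antitone G
  le_stage : ∀ n, n ≤ stage n
  approx_mul : ∀ n A, ∀ C ∈ G (stage n), r n (A * C) = r n A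
  mem_of_approx_mul_eq : ∀ n m A C, r m (A * C) = r n A → C ∈ G (stage n)

namespace IsAdapted

variable {α : Type*} {r : ℕ → M → α} {stage : ℕ → ℕ} (hr : IsAdapted G r stage)

include hr

theorem mem_ellSet_mul_iff {n : ℕ} {A B : M} (hg : g ∈ G (stage n)) :
    B ∈ EllSet IsRightMultiple r (r n A) (A * g) ↔ ∃ C ∈ G (stage n), B = A * g * C := by
  constructor
  · rintro ⟨⟨C, rfl⟩, m, hm⟩
    exact ⟨C, hr.mem_of_approx_mul_eq n m _ C (hm.trans (hr.approx_mul n A g hg).symm), rfl⟩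
  · rintro ⟨C, hC, rfl⟩
    exact ⟨⟨C, rfl⟩, n, by rw [hr.approx_mul n _ C hC, hr.approx_mul n A g hg]⟩

theorem mul_mem_ellSet {n : ℕ} {A B : M} (hB : IsRightMultiple B A) (hh : h ∈ G (stage n)) :
    B * h ∈ EllSet IsRightMultiple r (r n B) A :=
  ⟨hB.trans (dvd_mul_right B h), n, hr.approx_mul n B h hh⟩

theorem exists_accepts_of_isOpen (hU : IsOpen[EllTop IsRightMultiple r] U) :
    ∀ D ∈ U, ∃ j, Accepts G U j D := by
  induction hU with
  | basic s hs =>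
    obtain ⟨a, A, rfl⟩ := hs
    rintro D ⟨hD, n, rfl⟩
    exact ⟨stage n, fun h hh => hr.mul_mem_ellSet hD hh⟩
  | univ => exact fun _ _ => ⟨0, fun _ _ => trivial⟩
  | inter s s' _ _ ih ih' =>
    rintro D ⟨hD, hD'⟩
    obtain ⟨j, hj⟩ := ih D hD
    obtain ⟨j', hj'⟩ := ih' D hD'
    exact ⟨max j j', fun h hh => ⟨hj h (hr.antitone (le_max_left _ _) hh),
      hj' h (hr.antitone (le_max_right _ _) hh)⟩⟩
  | sUnion c _ ih =>
    rintro D ⟨s, hs, hD⟩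
    obtain ⟨j, hj⟩ := ih s hs D hD
    exact ⟨j, fun h hh => ⟨s, hs, hj h hh⟩⟩

theorem isRamseyFor_of_isOpen (hD : Diagonalizes G) (hP : HasPigeonhole G)
    (hU : IsOpen[EllTop IsRightMultiple r] U) : IsRamseyFor G U :=
  hD.isRamseyFor_of_isOpen hP fun D hD k =>
    have ⟨j, hj⟩ := hr.exists_accepts_of_isOpen hU D hD
    ⟨max j k, le_max_right _ _, fun h hh => hj h (hr.antitone (le_max_left _ _) hh)⟩

/-- The complement of the closure is Ramsey, and an orbit inside the closure would contain a
basic open set. -/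
theorem isNullFor_of_isNowhereDense (hD : Diagonalizes G) (hP : HasPigeonhole G)
    (hN : @IsNowhereDense M (EllTop IsRightMultiple r) N) : IsNullFor G N := by
  let τ : TopologicalSpace M := EllTop IsRightMultiple r
  intro D k
  obtain ⟨g, hg, hout | hin⟩ :=
    hr.isRamseyFor_of_isOpen hD hP (isClosed_closure (s := N)).isOpen_compl D k
  · exact ⟨g, hg, fun C hC hmem => hout C hC (subset_closure hmem)⟩
  exfalso
  have hopen : IsOpen (EllSet IsRightMultiple r (r k (D * g)) (D * g)) :=
    TopologicalSpace.isOpen_generateFrom_of_mem ⟨_, _, rfl⟩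
  have hsub : EllSet IsRightMultiple r (r k (D * g)) (D * g) ⊆ closure N := by
    rintro _ ⟨⟨C, rfl⟩, m, hm⟩
    exact not_not.mp <| hin C <| hr.antitone (hr.le_stage k) <|
      hr.mem_of_approx_mul_eq k m _ C hm
  have hmem : D * g ∈ interior (closure N) :=
    mem_interior.mpr ⟨_, hsub, hopen, dvd_rfl, k, rfl⟩
  exact (Set.mem_empty_iff_false _).mp (hN.subset hmem)

theorem isNullFor_of_isMeagre (hD : Diagonalizes G) (hP : HasPigeonhole G)
    (hN : @IsMeagre M (EllTop IsRightMultiple r) N) : IsNullFor G N := by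
  let _ : TopologicalSpace M := EllTop IsRightMultiple r
  obtain ⟨c, hnowhere, hcount, hsub⟩ := isMeagre_iff_countable_union_isNowhereDense.mp hN
  obtain ⟨f, hf⟩ := (hcount.insert ∅).exists_eq_range (Set.insert_nonempty _ _)
  have hnull : ∀ n, IsNullFor G (f n) := by
    intro n
    have hn : f n ∈ insert ∅ c := hf ▸ Set.mem_range_self n
    refine hr.isNullFor_of_isNowhereDense hD hP ?_
    rcases hn with hn | hn
    · exact hn ▸ isNowhereDense_empty
    · exact hnowhere _ hn
  refine (hD.isNullFor_iUnion hnull).mono (hsub.trans ?_)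
  rw [← Set.sUnion_range, ← hf]
  exact Set.sUnion_mono (Set.subset_insert _ _)

theorem isRamseySet (hS : IsRamseyFor G S) : IsRamseySet IsRightMultiple r S := by
  rintro a A ⟨F, hFA, n, rfl⟩
  obtain ⟨g, hg, hgS⟩ := hS F (stage n)
  refine ⟨F * g, hr.mul_mem_ellSet hFA hg,
    hgS.imp (fun hin B hB => ?_) fun hout => Set.eq_empty_of_forall_notMem ?_⟩
  · obtain ⟨C, hC, rfl⟩ := (hr.mem_ellSet_mul_iff hg).mp hB
    exact hin C hC
  · rintro B ⟨hB, hmem⟩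
    obtain ⟨C, hC, rfl⟩ := (hr.mem_ellSet_mul_iff hg).mp hB
    exact hout C hC hmem

theorem isRamseyNullSet (hN : IsNullFor G N) : IsRamseyNullSet IsRightMultiple r N := by
  rintro a A ⟨F, hFA, n, rfl⟩
  obtain ⟨g, hg, hnull⟩ := hN F (stage n)
  refine ⟨F * g, hr.mul_mem_ellSet hFA hg, Set.eq_empty_of_forall_notMem ?_⟩
  rintro B ⟨hB, hmem⟩
  obtain ⟨C, hC, rfl⟩ := (hr.mem_ellSet_mul_iff hg).mp hB
  exact hnull C hC hmem

theorem isTopRamseySpace (hD : Diagonalizes G) (hP : HasPigeonhole G) :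
    IsTopRamseySpace IsRightMultiple r := by
  refine ⟨?_, fun N hN => hr.isRamseyNullSet (hr.isNullFor_of_isMeagre hD hP hN)⟩
  rintro S ⟨U, N, hU, hN, rfl⟩
  exact hr.isRamseySet <|
    (hr.isRamseyFor_of_isOpen hD hP hU).symmDiff (hr.isNullFor_of_isMeagre hD hP hN)

end IsAdapted

end AbstractRamsey

section IdempotentUltrafilters

variable {X : Type*} [Semigroup X] [TopologicalSpace X]

/-- A nonempty closed set absorbing left multiplication by `T`; for a compact subsemigroup `T`
the minimal ones are the sources of minimal idempotents. -/
structure IsClosedLeftIdeal (T L : Set X) : Prop where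
  isClosed : IsClosed L
  nonempty : L.Nonempty
  mul_mem : ∀ a ∈ T, ∀ b ∈ L, a * b ∈ L

variable [CompactSpace X]

theorem IsClosedLeftIdeal.exists_minimal {T L : Set X} (hL : IsClosedLeftIdeal T L) :
    ∃ L' ⊆ L, Minimal (IsClosedLeftIdeal T) L' := by
  refine zorn_superset_nonempty {L | IsClosedLeftIdeal T L} (fun c hc hchain hne => ?_) L hL
  refine ⟨⋂₀ c, ⟨isClosed_sInter fun s hs => (hc hs).isClosed, ?_, fun a ha b hb s hs =>
    (hc hs).mul_mem a ha b (hb s hs)⟩, fun s hs => Set.sInter_subset_of_mem hs⟩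
  have := hne.to_subtype
  rw [Set.sInter_eq_iInter]
  exact IsCompact.nonempty_iInter_of_directed_nonempty_isCompact_isClosed _
    (DirectedOn.directed_val (IsChain.directedOn hchain.symm))
    (fun s => (hc s.2).nonempty) (fun s => (hc s.2).isClosed.isCompact)
    fun s => (hc s.2).isClosed

variable [T2Space X]

theorem exists_minimal_idempotent (hcont : ∀ r : X, Continuous (· * r)) {T : Set X}
    (hT : IsClosedLeftIdeal T T) :
    ∃ u ∈ T, u * u = u ∧ ∀ e ∈ T, e * e = e → u * e = e → e * u = e → e = u := by
  obtain ⟨L, hLT, hL⟩ := hT.exists_minimal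
  obtain ⟨u, huL, hu⟩ := exists_idempotent_in_compact_subsemigroup hcont L hL.prop.nonempty
    hL.prop.isClosed.isCompact fun a ha b hb => hL.prop.mul_mem a (hLT ha) b hb
  refine ⟨u, hLT huL, hu, fun e heT he hue heu => ?_⟩
  have heL : e ∈ L := heu ▸ hL.prop.mul_mem e heT u huL
  have hideal : IsClosedLeftIdeal T ((· * e) '' T) := by
    refine ⟨(hT.isClosed.isCompact.image (hcont e)).isClosed, hT.nonempty.image _, ?_⟩
    rintro a ha _ ⟨b, hb, rfl⟩
    exact ⟨a * b, hT.mul_mem a ha b hb, mul_assoc a b e⟩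
  have hsub : (· * e) '' T ⊆ L := Set.image_subset_iff.mpr fun a ha => hL.prop.mul_mem a ha e heL
  obtain ⟨z, -, hz : z * e = u⟩ := hL.le_of_le hideal hsub huL
  calc e = z * e * e := by rw [hz, hue]
    _ = u := by rw [mul_assoc, he, hz]

theorem exists_idempotent_le (hcont : ∀ r : X, Continuous (· * r)) {I : Set X}
    (hIclosed : IsClosed I) (hIne : I.Nonempty) (hI : ∀ a b, a ∈ I ∨ b ∈ I → a * b ∈ I) {u : X}
    (hu : u * u = u) : ∃ v ∈ I, v * v = v ∧ u * v = v ∧ v * u = v := by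
  obtain ⟨_, ⟨q, hq, rfl⟩, hidem : q * u * (q * u) = q * u⟩ :=
    exists_idempotent_in_compact_subsemigroup hcont ((· * u) '' I) (hIne.image _)
      (hIclosed.isCompact.image (hcont u)) <| by
        rintro _ ⟨a, ha, rfl⟩ _ ⟨b, -, rfl⟩
        exact ⟨a * (u * b), hI _ _ (Or.inl ha), by simp only [mul_assoc]⟩
  refine ⟨u * (q * u), hI _ _ (Or.inr (hI _ _ (Or.inl hq))), ?_, ?_, ?_⟩
  · calc u * (q * u) * (u * (q * u)) = u * (q * (u * u) * (q * u)) := by simp only [mul_assoc]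
      _ = u * (q * u) := by rw [hu, hidem]
  · rw [← mul_assoc, hu]
  · rw [mul_assoc, mul_assoc, hu]

attribute [local instance] Ultrafilter.semigroup

theorem ultrafilter_map_mul {M N : Type*} [Semigroup M] [Semigroup N] (f : M →ₙ* N)
    (p q : Ultrafilter M) : (p * q).map f = p.map f * q.map f := by
  refine Ultrafilter.ext fun Y => ?_
  have hmap := Ultrafilter.eventually_mul p q fun m => f m ∈ Y
  simp only [map_mul] at hmap
  exact hmap.trans (Ultrafilter.eventually_mul (p.map f) (q.map f) (· ∈ Y)).symm

theorem mul_mem_ultrafilter {M : Type*} [Semigroup M] {A B C : Set M} {p q : Ultrafilter M}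
    (hA : A ∈ p) (hB : B ∈ q) (h : ∀ a ∈ A, ∀ b ∈ B, a * b ∈ C) : C ∈ p * q :=
  (Ultrafilter.eventually_mul p q (· ∈ C)).mpr <|
    Filter.mem_of_superset hA fun a ha => Filter.mem_of_superset hB fun b hb => h a ha b hb

/-- `u` is minimal among the idempotents concentrating on `T`, and `v ≤ u` concentrates on `I`.
Then `v.map f ≤ u` is an idempotent concentrating on `T`, hence equal to `u`. -/
theorem exists_idempotent_ultrafilters {M : Type*} [Semigroup M] (T : Subsemigroup M) (I : Set M)
    (hT : (T : Set M).Nonempty) (hIne : I.Nonempty) (hI : ∀ a b, a ∈ I ∨ b ∈ I → a * b ∈ I) :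
    ∃ u v : Ultrafilter M, I ∈ v ∧ u * u = u ∧ v * v = v ∧ u * v = v ∧ v * u = v ∧
      ∀ f : M →ₙ* M, (∀ a ∈ T, f a = a) → (∀ a ∈ I, f a ∈ T) → v.map f = u := by
  have nonempty_of {Y : Set M} (hY : Y.Nonempty) : {p : Ultrafilter M | Y ∈ p}.Nonempty :=
    hY.elim fun a ha => ⟨pure a, Ultrafilter.mem_pure.mpr ha⟩
  obtain ⟨u, huT, hu, hmin⟩ := exists_minimal_idempotent (X := Ultrafilter M)
    Ultrafilter.continuous_mul_left (T := {p | (T : Set M) ∈ p})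
    ⟨ultrafilter_isClosed_basic _, nonempty_of hT, fun p hp q hq =>
      mul_mem_ultrafilter hp hq fun _ ha _ hb => T.mul_mem ha hb⟩
  obtain ⟨v, hvI, hv, huv, hvu⟩ := exists_idempotent_le (X := Ultrafilter M)
    Ultrafilter.continuous_mul_left (I := {p | I ∈ p}) (ultrafilter_isClosed_basic _)
    (nonempty_of hIne)
    (fun p q h => h.elim
      (fun hp => mul_mem_ultrafilter hp Filter.univ_mem fun a ha b _ => hI a b (Or.inl ha))
      fun hq => mul_mem_ultrafilter Filter.univ_mem hq fun a _ b hb => hI a b (Or.inr hb)) hu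
  refine ⟨u, v, hvI, hu, hv, huv, hvu, fun f hfT hfI => ?_⟩
  have hfu : u.map f = u := Ultrafilter.coe_injective <|
    (Filter.map_congr (Filter.mem_of_superset huT hfT)).trans Filter.map_id
  refine hmin _ (Filter.mem_of_superset hvI hfI) ?_ ?_ ?_
  · rw [← ultrafilter_map_mul, hv]
  · conv_lhs => rw [← hfu, ← ultrafilter_map_mul, huv]
  · conv_lhs => rw [← hfu, ← ultrafilter_map_mul, hvu]

section Products

variable {M κ : Type*} [Monoid M] [Finite κ] {v : Ultrafilter M} {f : κ → M → M}

/-- The partial products that can be continued inside `P` by `v`-almost every element, before and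
after appending `f a w` for `v`-almost every `w`. -/
def IsGeneric (v : Ultrafilter M) (f : κ → M → M) (P : M → M → Prop) (s : M) : Prop :=
  (∀ᶠ w in v, P s w) ∧ ∀ a, ∀ᶠ w in v, ∀ᶠ w' in v, P (s * f a w) w'

theorem eventually_isGeneric (hv : ∀ a, v * v.map (f a) = v) {P : M → M → Prop}
    (hP : ∀ᶠ s in v, ∀ᶠ w in v, P s w) : ∀ᶠ s in v, IsGeneric v f P s := by
  refine hP.and (Filter.eventually_all.mpr fun a => ?_)
  have hPa : ∀ᶠ s in (v * v.map (f a) : Ultrafilter M), ∀ᶠ w in v, P s w := by rwa [hv a]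
  exact hPa

theorem IsGeneric.eventually_mul (hf : ∀ a b, ∃ c, v.map (f a) * v.map (f b) = v.map (f c))
    {P : M → M → Prop} {s : M} (hs : IsGeneric v f P s) (a : κ) :
    ∀ᶠ w in v, IsGeneric v f P (s * f a w) := by
  refine (hs.2 a).and (Filter.eventually_all.mpr fun b => ?_)
  obtain ⟨c, hc⟩ := hf a b
  have hsc : ∀ᶠ x in v.map (f c), ∀ᶠ w in v, P (s * x) w := hs.2 c
  rw [← hc, Ultrafilter.eventually_mul] at hsc
  simp only [← mul_assoc] at hsc
  exact hsc

/-- The words `w k` are chosen one after another, so that all the finitely many products formed so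
far remain generic. -/
theorem exists_products_of_eventually
    (hf : ∀ a b, ∃ c, v.map (f a) * v.map (f b) = v.map (f c))
    (hv : ∀ a, v * v.map (f a) = v) {Y : Set M} (hY : Y ∈ v) {P : M → M → Prop}
    (hP : ∀ᶠ s in v, ∀ᶠ w in v, P s w) :
    ∃ (w₀ : M) (w : ℕ → M), (∀ k, w k ∈ Y) ∧
      ∀ k (a : ℕ → κ), P (w₀ * ((List.range k).map fun i => f (a i) (w i)).prod) (w k) := by
  obtain ⟨w₀, hw₀⟩ := (eventually_isGeneric hv hP).exists
  let State : Type _ := {F : Set M // F.Finite ∧ ∀ s ∈ F, IsGeneric v f P s}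
  have exists_next (F : State) :
      ∃ w ∈ Y, ∀ s ∈ F.1, P s w ∧ ∀ a, IsGeneric v f P (s * f a w) :=
    (Filter.Eventually.and hY ((Filter.eventually_all_finite F.2.1).mpr fun s hs =>
      (F.2.2 s hs).1.and (Filter.eventually_all.mpr ((F.2.2 s hs).eventually_mul hf)))).exists
  choose next hnextY hnext using exists_next
  let extend (F : State) : State :=
    ⟨Set.image2 (fun s a => s * f a (next F)) F.1 Set.univ, F.2.1.image2 _ Set.finite_univ, by
      rintro _ ⟨s, hs, a, -, rfl⟩
      exact (hnext F s hs).2 a⟩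
  let F (k : ℕ) : State :=
    extend^[k] ⟨{w₀}, Set.finite_singleton w₀, by simpa using hw₀⟩
  have product_mem : ∀ k (a : ℕ → κ),
      w₀ * ((List.range k).map fun i => f (a i) (next (F i))).prod ∈ (F k).1 := by
    intro k a
    induction k with
    | zero => simp [F]
    | succ k ih =>
      have hF : F (k + 1) = extend (F k) := Function.iterate_succ_apply' ..
      rw [hF, List.range_succ, List.map_append, List.prod_append, ← mul_assoc]
      exact ⟨_, ih, a k, trivial, by simp⟩
  exact ⟨w₀, fun k => next (F k), fun k => hnextY _, fun k a => (hnext _ _ (product_mem k a)).1⟩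

theorem exists_homogeneous_products (hf : ∀ a b, ∃ c, v.map (f a) * v.map (f b) = v.map (f c))
    (hv : ∀ a, v * v.map (f a) = v) {Y : Set M} (hY : Y ∈ v) (P : M → M → Prop) :
    ∃ (w₀ : M) (w : ℕ → M), (∀ k, w k ∈ Y) ∧
      ((∀ k (a : ℕ → κ), P (w₀ * ((List.range k).map fun i => f (a i) (w i)).prod) (w k)) ∨
        ∀ k (a : ℕ → κ), ¬ P (w₀ * ((List.range k).map fun i => f (a i) (w i)).prod) (w k)) := by
  by_cases hP : ∀ᶠ s in v, ∀ᶠ w in v, P s w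
  · obtain ⟨w₀, w, hw, h⟩ := exists_products_of_eventually hf hv hY hP
    exact ⟨w₀, w, hw, Or.inl h⟩
  · simp only [← Ultrafilter.eventually_not] at hP
    obtain ⟨w₀, w, hw, h⟩ := exists_products_of_eventually hf hv hY hP
    exact ⟨w₀, w, hw, Or.inr h⟩

end Products

/-- An infinitary left-variable-word theorem in the style of Carlson and Simpson. The letter
`none` is the variable, and `List.map (·.or a)` substitutes `a` for it. -/
theorem exists_homogeneous_variable_words {α : Type*} [Finite α]
    (P : List (Option α) → List (Option α) → Prop) :
    ∃ (w₀ : List (Option α)) (w : ℕ → List (Option α)), (∀ k, none ∈ w k) ∧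
      ((∀ k (a : ℕ → Option α),
          P (w₀ ++ (List.range k).flatMap fun i => (w i).map (·.or (a i))) (w k)) ∨
        ∀ k (a : ℕ → Option α),
          ¬ P (w₀ ++ (List.range k).flatMap fun i => (w i).map (·.or (a i))) (w k)) := by
  let subst : Option α → FreeMonoid (Option α) →* FreeMonoid (Option α) :=
    fun a => FreeMonoid.map (·.or a)
  let T : Subsemigroup (FreeMonoid (Option α)) :=
    { carrier := {w | none ∉ w}
      mul_mem' := fun ha hb h => (FreeMonoid.mem_mul.mp h).elim ha hb }
  obtain ⟨u, v, hvI, hu, hv, huv, hvu, hsubst⟩ := exists_idempotent_ultrafilters T {w | none ∈ w}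
    ⟨1, FreeMonoid.notMem_one⟩ ⟨FreeMonoid.of none, FreeMonoid.mem_of_self⟩
    fun a b h => FreeMonoid.mem_mul.mpr h
  have map_none : v.map (subst none) = v := by
    have hid : subst none = MonoidHom.id _ := FreeMonoid.hom_eq fun x => by
      simp [subst, Option.or_none]
    rw [hid]
    exact v.map_id
  have map_some (a : α) : v.map (subst (some a)) = u := by
    refine hsubst (subst (some a)).toMulHom (fun w (hw : none ∉ w) => ?_) fun w _ h => ?_
    · refine (List.map_congr_left fun x hx => ?_).trans (List.map_id w)
      obtain ⟨b, rfl⟩ := Option.ne_none_iff_exists'.mp (ne_of_mem_of_not_mem hx hw)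
      rfl
    · obtain ⟨x, -, hx⟩ := List.mem_map.mp h
      simp at hx
  obtain ⟨w₀, w, hw, h⟩ := exists_homogeneous_products (κ := Option α) (v := v)
    (f := fun a => subst a) (by
      rintro (_ | a) (_ | b)
      · exact ⟨none, by simp only [map_none, hv]⟩
      · exact ⟨none, by simp only [map_none, map_some, hvu]⟩
      · exact ⟨none, by simp only [map_none, map_some, huv]⟩
      · exact ⟨some a, by simp only [map_some, hu]⟩)
    (by rintro (_ | a) <;> simp only [map_none, map_some, hv, hvu]) hvI
    (fun s w => P s.toList w.toList)
  simp only [FreeMonoid.toList_mul, FreeMonoid.toList_prod, List.map_map] at h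
  exact ⟨w₀.toList, fun k => (w k).toList, hw, h⟩

end IdempotentUltrafilters

section AscendingWords

variable {t : ℕ}

theorem mem_StLt_iff {A : ℕ → ℕ} :
    A ∈ StLt t ↔ (∀ i < t, A i = i) ∧ MonotoneOn A {i | t ≤ A i} ∧ Function.Surjective A := by
  constructor
  · rintro ⟨⟨hs, hf, -⟩, -, hlt⟩
    refine ⟨hf, fun i hi i' hi' hle => ?_, hs⟩
    by_contra! hgt
    obtain ⟨d, hd⟩ := Nat.exists_eq_add_of_le (show t ≤ A i from hi)
    obtain ⟨d', hd'⟩ := Nat.exists_eq_add_of_le (show t ≤ A i' from hi')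
    exact (hlt d' d (by omega) i' i hd' hd).not_ge hle
  · rintro ⟨hf, hm, hs⟩
    have lt_of_apply_lt : ∀ i i', t ≤ A i → A i < A i' → i < i' := fun i i' hi hlt =>
      lt_of_not_ge fun hle => (hm (hi.trans hlt.le) hi hle).not_gt hlt
    refine ⟨⟨hs, hf, fun j j' hj => ?_⟩, fun j => ?_, fun j j' hj i i' h h' =>
      lt_of_apply_lt i i' (by omega) (by omega)⟩
    · rcases lt_or_ge j t with hjt | hjt
      · refine ⟨j, hf j hjt, fun i' h' => ?_⟩
        by_contra! hle
        have := hf i' (by omega)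
        omega
      · obtain ⟨i, hi⟩ := hs j
        exact ⟨i, hi, fun i' h' => lt_of_apply_lt i i' (by omega) (by omega)⟩
    · obtain ⟨i₀, hi₀⟩ := hs (t + j + 1)
      refine (Set.finite_Iio i₀).subset fun i (hi : A i = t + j) => ?_
      exact lt_of_apply_lt i i₀ (by omega) (by omega)

namespace StLt

theorem apply_of_lt (A : StLt t) {i : ℕ} (hi : i < t) : A.1 i = i := (mem_StLt_iff.mp A.2).1 i hi

theorem apply_mono (A : StLt t) {i i' : ℕ} (h : i ≤ i') (hi : t ≤ A.1 i) (hi' : t ≤ A.1 i') :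
    A.1 i ≤ A.1 i' := (mem_StLt_iff.mp A.2).2.1 hi hi' h

theorem exists_apply_eq (A : StLt t) (n : ℕ) : ∃ i, A.1 i = n := (mem_StLt_iff.mp A.2).2.2 n

theorem apply_le (A : StLt t) (i : ℕ) : A.1 i ≤ i := by
  induction i using Nat.strong_induction_on with
  | _ i ih =>
    rcases lt_or_ge i t with hi | hi
    · exact (apply_of_lt A hi).le
    by_contra! hlt
    obtain ⟨i', hi'⟩ := exists_apply_eq A (A.1 i - 1)
    rcases lt_or_ge i' i with h | h
    · have := ih i' h
      omega
    · have := apply_mono A h (by omega) (by omega)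
      omega

instance : Monoid (StLt t) where
  mul A B := ⟨compP A.1 B.1, mem_StLt_iff.mpr
    ⟨fun i hi => (congrArg B.1 (apply_of_lt A hi)).trans (apply_of_lt B hi),
      fun i hi i' hi' h =>
        have le_of_le_apply {x : ℕ} (hx : t ≤ B.1 x) : t ≤ x := hx.trans (apply_le B x)
        apply_mono B (apply_mono A h (le_of_le_apply hi) (le_of_le_apply hi')) hi hi',
      (mem_StLt_iff.mp B.2).2.2.comp (mem_StLt_iff.mp A.2).2.2⟩⟩
  one := ⟨id, mem_StLt_iff.mpr ⟨fun _ _ => rfl, fun _ _ _ _ h => h, Function.surjective_id⟩⟩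
  mul_assoc _ _ _ := rfl
  one_mul _ := rfl
  mul_one _ := rfl

theorem mul_apply (A B : StLt t) (i : ℕ) : (A * B).1 i = B.1 (A.1 i) := rfl

/-- The submonoid of ascending parameter words which are the identity below `t + j`. -/
def fixing (t j : ℕ) : Submonoid (StLt t) where
  carrier := {A | ∀ i < t + j, A.1 i = i}
  one_mem' := fun _ _ => rfl
  mul_mem' := fun {A B} hA hB i hi => by rw [mul_apply, hA i hi, hB i hi]

theorem fixing_antitone (t : ℕ) : Antitone (fixing t) :=
  fun _ _ h _ hA i hi => hA i (by omega)

theorem mem_fixing_zero (A : StLt t) : A ∈ fixing t 0 := fun _ hi => apply_of_lt A hi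

theorem exists_limit {n : ℕ} {A : ℕ → StLt t}
    (hA : ∀ d i, (A d).1 i < n + d → (A (d + 1)).1 i = (A d).1 i) :
    ∃ p : StLt t, ∀ d i, (A d).1 i < n + d → p.1 i = (A d).1 i := by
  have stable : ∀ d i, (A d).1 i < n + d → ∀ d' ≥ d, (A d').1 i = (A d).1 i := by
    intro d i hi d' hd
    induction d', hd using Nat.le_induction with
    | base => rfl
    | succ d' hd ih => rw [hA d' i (by omega), ih]
  have limit : ∀ d i, (A d).1 i < n + d → (A (i + 1)).1 i = (A d).1 i := by
    intro d i hi
    have := apply_le (A (i + 1)) i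
    rw [← stable (i + 1) i (by omega) _ (le_max_right d (i + 1)),
      stable d i hi _ (le_max_left _ _)]
  refine ⟨⟨fun i => (A (i + 1)).1 i, mem_StLt_iff.mpr ⟨fun i hi => apply_of_lt (A (i + 1)) hi,
    fun i (hi : t ≤ _) i' hi' hii => ?_, fun m => ?_⟩⟩, limit⟩
  · have hle := apply_le (A (i' + 1)) i
    have heq := limit (i' + 1) i (by omega)
    rw [heq] at hi
    exact heq.trans_le (apply_mono (A (i' + 1)) hii hi hi')
  · obtain ⟨i, hi⟩ := exists_apply_eq (A (m + 1)) m
    exact ⟨i, (limit (m + 1) i (by omega)).trans hi⟩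

theorem exists_infinite_product {k : ℕ} {h : ℕ → StLt t} (hh : ∀ m, h m ∈ fixing t (k + m)) :
    ∃ p ∈ fixing t k, ∀ d i, (((List.range d).map h).prod).1 i < t + k + d →
      p.1 i = (((List.range d).map h).prod).1 i := by
  obtain ⟨p, hp⟩ := exists_limit (n := t + k) (A := fun d => ((List.range d).map h).prod) <| by
    intro d i hi
    simp only [List.prod_range_succ, mul_apply]
    exact hh d _ (by omega)
  exact ⟨p, fun i hi => hp 0 i hi, hp⟩

theorem exists_forall_eq_prod_mul {k : ℕ} {h : ℕ → StLt t} (hh : ∀ m, h m ∈ fixing t (k + m)) :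
    ∃ g ∈ fixing t k, ∀ m, ∃ p ∈ fixing t (k + m), g = ((List.range m).map h).prod * p := by
  obtain ⟨g, hg, hgP⟩ := exists_infinite_product hh
  refine ⟨g, hg, fun m => ?_⟩
  obtain ⟨p, hp, hpP⟩ := exists_infinite_product (k := k + m) (h := fun d => h (m + d))
    fun d => by simpa only [add_assoc] using hh (m + d)
  refine ⟨p, hp, Subtype.ext (funext fun i => ?_)⟩
  have split : ((List.range (m + (i + 1))).map h).prod =
      ((List.range m).map h).prod * ((List.range (i + 1)).map fun d => h (m + d)).prod := by
    rw [List.range_add, List.map_append, List.prod_append, List.map_map]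
    rfl
  have hle := apply_le ((List.range (m + (i + 1))).map h).prod i
  rw [hgP (m + (i + 1)) i (by omega), mul_apply]
  rw [split, mul_apply] at hle ⊢
  exact (hpP (i + 1) _ (by omega)).symm

theorem exists_forall_of_isDenseOpen {Q : ℕ → StLt t → Prop} {k : ℕ}
    (hQ : ∀ m ≥ k, IsDenseOpen (fixing t m) (Q m)) : ∃ g ∈ fixing t k, ∀ m ≥ k, Q m g := by
  choose c hc hQc using fun m => (hQ (k + m) le_self_add).exists_mul
  let f : ℕ → StLt t := fun m => Nat.rec 1 (fun m x => x * c m x) m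
  have prod_eq : ∀ m, ((List.range m).map fun m => c m (f m)).prod = f m := by
    intro m
    induction m with
    | zero => rfl
    | succ m ih => rw [List.prod_range_succ, ih]
  obtain ⟨g, hg, H⟩ := exists_forall_eq_prod_mul (h := fun m => c m (f m)) fun m => hc m _
  refine ⟨g, hg, fun m hm => ?_⟩
  obtain ⟨d, rfl⟩ := Nat.exists_eq_add_of_le hm
  obtain ⟨p, hp, rfl⟩ := H (d + 1)
  rw [prod_eq]
  exact (hQ _ hm).mul_right _ (hQc d (f d)) p (fixing_antitone t (by omega) hp)

/-- `L` is the restriction of an ascending parameter word to the positions preceding the first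
occurrence of the value `n`. -/
structure IsApprox (t : ℕ) (L : List ℕ) (n : ℕ) : Prop where
  base_le_length : t ≤ L.length
  fix : ∀ i (hi : i < L.length), i < t → L[i] = i
  pairwise : L.Pairwise fun a b => t ≤ a → t ≤ b → a ≤ b
  mem_iff : ∀ a, a ∈ L ↔ a < n

/-- The sequence `y` can follow an initial segment of an ascending parameter word in which
exactly the values below `n` have occurred. -/
structure IsTail (t : ℕ) (y : ℕ → ℕ) (n : ℕ) : Prop where
  le : ∀ i, t ≤ y i → n ≤ y i
  monotoneOn : MonotoneOn y {i | t ≤ y i}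
  exists_eq : ∀ m ≥ n, ∃ i, y i = m

theorem isTail_add (t n : ℕ) : IsTail t (n + ·) n where
  le i _ := n.le_add_right i
  monotoneOn _ _ _ _ h := Nat.add_le_add_left h n
  exists_eq _ hm := (Nat.exists_eq_add_of_le hm).imp fun _ => Eq.symm

theorem IsTail.shift {y : ℕ → ℕ} {j : ℕ} (hy : IsTail t y (t + j)) (d : ℕ) :
    IsTail t (fun i => if y i < t then y i else y i + d) (t + (j + d)) where
  le i hi := by
    have := hy.le i
    split_ifs at hi ⊢ <;> omega
  monotoneOn i (hi : t ≤ _) i' (hi' : t ≤ _) h := by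
    have := hy.monotoneOn (a := i) (b := i')
    simp only [Set.mem_ofPred_eq] at this ⊢
    split_ifs at hi hi' ⊢ <;> omega
  exists_eq n hn := by
    obtain ⟨i, hi⟩ := hy.exists_eq (n - d) (by omega)
    exact ⟨i, by rw [if_neg (by omega)]; omega⟩

theorem isTail_of_apply_eq (A : StLt t) {l n : ℕ} (hn : t ≤ n) (hl : A.1 l = n) :
    IsTail t (fun i => A.1 (l + i)) n where
  le i hi := hl ▸ apply_mono A le_self_add (hl ▸ hn) hi
  monotoneOn _ hi _ hi' h := apply_mono A (Nat.add_le_add_left h l) hi hi'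
  exists_eq m hm := by
    obtain ⟨i, rfl⟩ := exists_apply_eq A m
    rcases le_total l i with h | h
    · obtain ⟨d, rfl⟩ := Nat.exists_eq_add_of_le h
      exact ⟨d, rfl⟩
    · have := apply_mono A h (hn.trans hm) (hl ▸ hn)
      exact ⟨0, by rw [add_zero]; omega⟩

namespace IsApprox

variable {L : List ℕ} {n : ℕ} {y : ℕ → ℕ}

theorem getElem_lt (hL : IsApprox t L n) {i : ℕ} (hi : i < L.length) : L[i] < n :=
  (hL.mem_iff _).mp (List.getElem_mem hi)

theorem base_le (hL : IsApprox t L n) : t ≤ n := by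
  by_contra! hlt
  have hmem := List.getElem_mem (hlt.trans_le hL.base_le_length)
  rw [hL.fix n _ hlt, hL.mem_iff] at hmem
  exact hmem.false

theorem le_length (hL : IsApprox t L n) : n ≤ L.length := by
  have hsub : Finset.range n ⊆ L.toFinset := fun a ha =>
    List.mem_toFinset.mpr ((hL.mem_iff a).mpr (Finset.mem_range.mp ha))
  simpa only [Finset.card_range] using (Finset.card_le_card hsub).trans (List.toFinset_card_le L)

theorem range (t j : ℕ) : IsApprox t (List.range (t + j)) (t + j) where
  base_le_length := by simp
  fix := by simp
  pairwise := List.pairwise_lt_range.imp fun h _ _ => h.le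
  mem_iff := by simp

theorem unique {n' : ℕ} (h : IsApprox t L n) (h' : IsApprox t L n') :
    n = n' :=
  eq_of_forall_lt_iff fun a => (h.mem_iff a).symm.trans (h'.mem_iff a)

theorem finite (t m : ℕ) :
    {x : List ℕ × ℕ | x.1.length = t + m ∧ IsApprox t x.1 (t + x.2)}.Finite := by
  have hlists : {L : List ℕ | L.length = t + m ∧ ∀ a ∈ L, a < t + m}.Finite :=
    ((List.finite_length_eq (Fin (t + m)) (t + m)).image (List.map Fin.val)).subset <| by
      rintro L ⟨hlength, hlt⟩
      exact ⟨L.pmap Fin.mk hlt, by simpa, by simp [List.map_pmap]⟩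
  refine (hlists.prod (Set.finite_Iic m)).subset ?_
  rintro ⟨L, j⟩ ⟨hm, hL⟩
  have hle := hL.le_length
  have hj : j ≤ m := by omega
  exact ⟨⟨hm, fun a ha => ((hL.mem_iff a).mp ha).trans_le (by omega)⟩, hj⟩

/-- The ascending parameter word consisting of `L` followed by the values of `y`. -/
def glue (hL : IsApprox t L n) (hy : IsTail t y n) : StLt t :=
  ⟨fun i => if h : i < L.length then L[i] else y (i - L.length), by
    have hlt := hL.base_le_length
    refine mem_StLt_iff.mpr ⟨fun i hi => ?_, fun i hi i' hi' h => ?_, fun m => ?_⟩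
    · rw [dif_pos (hi.trans_le hlt), hL.fix _ _ hi]
    · simp only [Set.mem_ofPred_eq] at hi hi' ⊢
      split_ifs at hi hi' ⊢ with h₁ h₂ h₂
      · rcases h.lt_or_eq with h | rfl
        · exact List.pairwise_iff_getElem.mp hL.pairwise i i' h₁ h₂ h hi hi'
        · exact le_rfl
      · exact (hL.getElem_lt h₁).le.trans (hy.le _ hi')
      · omega
      · exact hy.monotoneOn hi hi' (by omega)
    · rcases lt_or_ge m n with hm | hm
      · obtain ⟨i, hi, rfl⟩ := List.mem_iff_getElem.mp ((hL.mem_iff m).mpr hm)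
        exact ⟨i, dif_pos hi⟩
      · obtain ⟨i, rfl⟩ := hy.exists_eq m hm
        exact ⟨L.length + i, by simp⟩⟩

theorem glue_apply_of_lt (hL : IsApprox t L n) (hy : IsTail t y n) {i : ℕ} (hi : i < L.length) :
    (hL.glue hy).1 i = L[i] := dif_pos hi

theorem glue_apply_add (hL : IsApprox t L n) (hy : IsTail t y n) (i : ℕ) :
    (hL.glue hy).1 (L.length + i) = y i := by simp [glue]

theorem eq_glue (hL : IsApprox t L n) (hy : IsTail t y n) {A : StLt t}
    (hlt : ∀ i (hi : i < L.length), A.1 i = L[i]) (hadd : ∀ i, A.1 (L.length + i) = y i) :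
    A = hL.glue hy := by
  refine Subtype.ext (funext fun i => ?_)
  rcases lt_or_ge i L.length with hi | hi
  · rw [hlt i hi, hL.glue_apply_of_lt hy hi]
  · obtain ⟨d, rfl⟩ := Nat.exists_eq_add_of_le hi
    rw [hadd, hL.glue_apply_add hy]

/-- The word `L` followed by `n, n + 1, n + 2, …`. -/
def word (hL : IsApprox t L n) : StLt t := hL.glue (isTail_add t n)

theorem word_apply_of_lt (hL : IsApprox t L n) {i : ℕ} (hi : i < L.length) :
    hL.word.1 i = L[i] := hL.glue_apply_of_lt _ hi

theorem word_apply_add (hL : IsApprox t L n) (i : ℕ) : hL.word.1 (L.length + i) = n + i :=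
  hL.glue_apply_add _ i

theorem range_glue_mem_fixing {j : ℕ} (hy : IsTail t y (t + j)) (hy₀ : y 0 = t + j) :
    (range t j).glue hy ∈ fixing t (j + 1) := by
  intro i hi
  rcases Nat.lt_succ_iff_lt_or_eq.mp hi with hi | rfl
  · rw [glue_apply_of_lt _ _ (by simpa using hi), List.getElem_range]
  · simpa [hy₀] using (range t j).glue_apply_add hy 0

theorem word_mul_range_glue {j : ℕ} (hL : IsApprox t L (t + j)) (hy : IsTail t y (t + j)) :
    hL.word * (range t j).glue hy = hL.glue hy := by
  refine hL.eq_glue hy (fun i hi => ?_) fun i => ?_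
  · rw [mul_apply, hL.word_apply_of_lt hi,
      glue_apply_of_lt _ _ (by simpa using hL.getElem_lt hi), List.getElem_range]
  · simpa [mul_apply, hL.word_apply_add] using (range t j).glue_apply_add hy i

theorem range_glue_shift_mul_word {j d : ℕ}
    (hL : IsApprox t L (t + j)) (hd : L.length = t + (j + d)) (hy : IsTail t y (t + j)) :
    (range t (j + d)).glue (hy.shift d) * hL.word = hL.glue hy := by
  refine hL.eq_glue hy (fun i hi => ?_) fun i => ?_
  · rw [mul_apply, glue_apply_of_lt _ _ (by simpa using hd ▸ hi), List.getElem_range,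
      hL.word_apply_of_lt hi]
  · have hglue : ((range t (j + d)).glue (hy.shift d)).1 (L.length + i) = _ :=
      (congrArg _ (by rw [hd, List.length_range])).trans (glue_apply_add _ (hy.shift d) i)
    rw [mul_apply, hglue]
    split_ifs with hyt
    · exact apply_of_lt hL.word hyt
    · obtain ⟨c, hc⟩ := Nat.exists_eq_add_of_le (hy.le i (not_lt.mp hyt))
      rw [hc, show t + j + c + d = L.length + c by omega, hL.word_apply_add]

end IsApprox

/-- The values of `A` start with `L`. -/
def HasPrefix (A : StLt t) (L : List ℕ) : Prop := ∀ i (hi : i < L.length), A.1 i = L[i]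

/-- `L` is the restriction of `A` to the positions preceding the first occurrence of `n`. -/
structure HasApprox (A : StLt t) (L : List ℕ) (n : ℕ) : Prop where
  isApprox : IsApprox t L n
  hasPrefix : HasPrefix A L
  apply_length : A.1 L.length = n

/-- The restriction of `A` to the positions preceding the first occurrence of `n`. -/
noncomputable def approx (A : StLt t) (n : ℕ) : List ℕ :=
  List.ofFn fun i : Fin (sInf {i | A.1 i = n}) => A.1 i

theorem hasApprox_approx (A : StLt t) {n : ℕ} (hn : t ≤ n) : HasApprox A (approx A n) n := by
  have hfirst : A.1 (sInf {i | A.1 i = n}) = n := Nat.sInf_mem (exists_apply_eq A n)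
  have hbefore : ∀ i < sInf {i | A.1 i = n}, A.1 i ≠ n := fun _ hi =>
    Nat.notMem_of_lt_sInf (s := {i | A.1 i = n}) hi
  have hle := apply_le A (sInf {i | A.1 i = n})
  refine ⟨⟨?_, fun i hi hit => ?_, ?_, fun a => ?_⟩, fun i hi => ?_, ?_⟩
  · rw [approx, List.length_ofFn]
    omega
  · simp only [approx, List.getElem_ofFn, apply_of_lt A hit]
  · exact List.pairwise_ofFn.mpr fun i i' h hi hi' => apply_mono A h.le hi hi'
  · simp only [approx, List.mem_ofFn]
    constructor
    · rintro ⟨i, rfl⟩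
      by_contra! hge
      have := apply_mono A i.2.le (hn.trans hge) (by omega)
      exact hbefore i i.2 (by omega)
    · intro ha
      rcases lt_or_ge a t with hat | hat
      · exact ⟨⟨a, by omega⟩, apply_of_lt A hat⟩
      · obtain ⟨i, rfl⟩ := exists_apply_eq A a
        refine ⟨⟨i, lt_of_not_ge fun h => ?_⟩, rfl⟩
        have := apply_mono A h (by omega) hat
        omega
  · simp [approx]
  · rwa [approx, List.length_ofFn]

namespace HasApprox

variable {A C : StLt t} {L L' : List ℕ} {n j : ℕ}

theorem unique (h : HasApprox A L n) (h' : HasApprox A L' n) : L = L' := by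
  wlog hle : L.length ≤ L'.length generalizing L L'
  · exact (this h' h (le_of_not_ge hle)).symm
  have hlength : L.length = L'.length := by
    refine hle.antisymm (not_lt.mp fun hlt => ?_)
    have := h'.isApprox.getElem_lt hlt
    rw [← h'.hasPrefix _ hlt, h.apply_length] at this
    exact this.false
  exact List.ext_getElem hlength fun i hi hi' => by rw [← h.hasPrefix i hi, h'.hasPrefix i hi']

theorem eq_glue (h : HasApprox A L n) :
    A = h.isApprox.glue (isTail_of_apply_eq A h.isApprox.base_le h.apply_length) :=
  h.isApprox.eq_glue _ h.hasPrefix fun _ => rfl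

theorem of_mem_fixing (hA : A ∈ fixing t (j + 1)) :
    HasApprox A (List.range (t + j)) (t + j) where
  isApprox := .range t j
  hasPrefix i hi := by
    rw [List.length_range] at hi
    rw [hA i (by omega), List.getElem_range]
  apply_length := by rw [List.length_range, hA _ (by omega)]

theorem exists_eq_word_mul (h : HasApprox A L (t + j)) :
    ∃ C ∈ fixing t (j + 1), A = h.isApprox.word * C :=
  ⟨_, IsApprox.range_glue_mem_fixing _ h.apply_length,
    h.eq_glue.trans (h.isApprox.word_mul_range_glue _).symm⟩

theorem mul (h : HasApprox A L (t + j)) (hC : C ∈ fixing t (j + 1)) :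
    HasApprox (A * C) L (t + j) where
  isApprox := h.isApprox
  hasPrefix i hi := by
    have := h.isApprox.getElem_lt hi
    rw [mul_apply, h.hasPrefix i hi, hC _ (by omega)]
  apply_length := by rw [mul_apply, h.apply_length, hC _ (by omega)]

theorem mem_fixing (h : HasApprox A L (t + j)) (h' : HasApprox (A * C) L (t + j)) :
    C ∈ fixing t (j + 1) := by
  intro i hi
  rcases Nat.lt_succ_iff_lt_or_eq.mp (show i < (t + j).succ from hi) with hi | rfl
  · obtain ⟨l, hl, rfl⟩ := List.mem_iff_getElem.mp ((h.isApprox.mem_iff i).mpr hi)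
    conv_lhs => rw [← h.hasPrefix l hl, ← mul_apply, h'.hasPrefix l hl]
  · conv_lhs => rw [← h.apply_length, ← mul_apply, h'.apply_length]

theorem mem_iff_word_mem {S : Set (StLt t)} (hn : t + j = n)
    (hS : ∀ C ∈ fixing t j, ∀ h ∈ fixing t (j + 1), (C ∈ S ↔ C * h ∈ S))
    (hA : A ∈ fixing t j) (h : HasApprox A L n) : A ∈ S ↔ h.isApprox.word ∈ S := by
  subst hn
  obtain ⟨C, hC, heq⟩ := h.exists_eq_word_mul
  rw [hS h.isApprox.word (fun i hi => ?_) C hC, ← heq]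
  have hi' : i < L.length := hi.trans_le h.isApprox.le_length
  rw [h.isApprox.word_apply_of_lt hi', ← h.hasPrefix i hi', hA i hi]

end HasApprox

/-- `IsTruncation W m j`: some word agrees with `W` before the first occurrence of `t + j - 1`,
which is at position `t + m - 1`, and `W` continues in the simplest way. The indices are shifted
so that `W` intertwines `fixing t m` with `fixing t j`; the shift leaves `W = 1` for `j = 0`. -/
inductive IsTruncation : StLt t → ℕ → ℕ → Prop
  | one : IsTruncation 1 0 0
  | word {L : List ℕ} {m j : ℕ} (hL : IsApprox t L (t + j)) (hm : L.length = t + m) :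
    IsTruncation hL.word (m + 1) (j + 1)

namespace IsTruncation

variable {W h : StLt t} {m j : ℕ}

theorem le (hW : IsTruncation W m j) : j ≤ m := by
  cases hW with
  | one => exact le_rfl
  | word hL hm =>
    have := hL.le_length
    omega

theorem exists_mul_eq (hW : IsTruncation W m j) (hh : h ∈ fixing t m) :
    ∃ h' ∈ fixing t j, h * W = W * h' := by
  cases hW with
  | one => exact ⟨h, hh, rfl⟩
  | @word L m j hL hm =>
    refine HasApprox.exists_eq_word_mul ⟨hL, fun i hi => ?_, ?_⟩
    · rw [mul_apply, hh i (by omega), hL.word_apply_of_lt hi]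
    · rw [mul_apply, hh _ (by omega)]
      exact hL.word_apply_add 0

theorem exists_eq_mul (hW : IsTruncation W m j) (hh : h ∈ fixing t j) :
    ∃ h' ∈ fixing t m, h' * W = W * h := by
  have hle := hW.le
  cases hW with
  | one => exact ⟨h, hh, rfl⟩
  | @word L m j hL hm =>
    obtain ⟨d, rfl⟩ := Nat.exists_eq_add_of_le (Nat.le_of_succ_le_succ hle)
    have happrox := HasApprox.of_mem_fixing hh
    have hy := isTail_of_apply_eq h le_self_add happrox.apply_length
    refine ⟨_, IsApprox.range_glue_mem_fixing (hy.shift d) ?_,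
      (hL.range_glue_shift_mul_word hm hy).trans ?_⟩
    · rw [add_zero, happrox.apply_length, if_neg (by omega), add_assoc]
    · rw [← hL.word_mul_range_glue]
      exact congrArg _ happrox.eq_glue.symm

theorem finite (t m : ℕ) : {p : StLt t × ℕ | IsTruncation p.1 m p.2}.Finite := by
  rcases m with _ | m
  · refine (Set.finite_singleton (1, 0)).subset ?_
    rintro ⟨W, j⟩ (hW : IsTruncation W 0 j)
    cases hW
    rfl
  refine ((IsApprox.finite t m).dependent_image fun x hx => (hx.2.word, x.2 + 1)).subset ?_
  rintro ⟨W, j⟩ (hW : IsTruncation W (m + 1) j)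
  cases hW with
  | @word L _ j hL hm => exact ⟨(L, j), ⟨hm, hL⟩, rfl⟩

end IsTruncation

theorem exists_isTruncation (C : StLt t) (j : ℕ) :
    ∃ m W, IsTruncation W m j ∧ ∃ h ∈ fixing t j, C = W * h := by
  rcases j with _ | j
  · exact ⟨0, 1, .one, C, mem_fixing_zero C, rfl⟩
  · have hC := hasApprox_approx C (t.le_add_right j)
    obtain ⟨m, hm⟩ := Nat.exists_eq_add_of_le hC.isApprox.base_le_length
    exact ⟨m + 1, _, .word hC.isApprox hm, hC.exists_eq_word_mul⟩

/-- For the fusion, `f` is required at stage `m` to satisfy `Φ j (f * W)` for each of the finitely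
many truncations `W` with first index `m`. -/
theorem diagonalizes_fixing (t : ℕ) : Diagonalizes (fixing t) := by
  intro Φ k hΦ
  have hdense : ∀ m ≥ k, IsDenseOpen (fixing t m) fun f =>
      ∀ p ∈ {p : StLt t × ℕ | IsTruncation p.1 m p.2 ∧ k ≤ p.2}, Φ p.2 (f * p.1) := by
    refine fun m _ => .forall_mem_of_finite ((IsTruncation.finite t m).subset fun p hp => hp.1) ?_
    rintro ⟨W, j⟩ ⟨hW, hj⟩
    refine ⟨fun f hf h hh => ?_, fun f => ?_⟩
    · obtain ⟨h', hh', heq⟩ := hW.exists_mul_eq hh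
      rw [mul_assoc, heq, ← mul_assoc]
      exact (hΦ j hj).mul_right _ hf h' hh'
    · obtain ⟨h, hh, hf⟩ := (hΦ j hj).exists_mul (f * W)
      obtain ⟨h', hh', heq⟩ := hW.exists_eq_mul hh
      exact ⟨h', hh', by rwa [mul_assoc, heq, ← mul_assoc]⟩
  obtain ⟨g, hg, H⟩ := exists_forall_of_isDenseOpen hdense
  refine ⟨g, hg, fun C j hj => ?_⟩
  obtain ⟨m, W, hW, h, hh, rfl⟩ := exists_isTruncation C j
  rw [← mul_assoc]
  exact (hΦ j hj).mul_right _ (H m (hj.trans hW.le) (W, j) ⟨hW, hj⟩) h hh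

namespace HasPrefix

variable {A : StLt t} {L l : List ℕ} {n : ℕ}

theorem left (h : HasPrefix A (L ++ l)) : HasPrefix A L := fun i hi => by
  rw [h i (by rw [List.length_append]; omega), List.getElem_append_left hi]

theorem mul (h : HasPrefix A L) (C : StLt t) : HasPrefix (A * C) (L.map C.1) := fun i hi => by
  rw [List.length_map] at hi
  rw [mul_apply, h i hi, List.getElem_map]

theorem hasApprox (h : HasPrefix A (L ++ n :: l)) (hL : IsApprox t L n) : HasApprox A L n where
  isApprox := hL
  hasPrefix := h.left
  apply_length := by simpa using h L.length (by simp)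

theorem mem_fixing {j : ℕ} (h : HasPrefix A (List.range (t + j) ++ l)) : A ∈ fixing t j :=
  fun i hi => by
    rw [h.left i (by rwa [List.length_range]), List.getElem_range]

theorem exists_of_isPrefix {L : ℕ → List ℕ} (hL : ∀ k, IsApprox t (L k) (n + k))
    (hprefix : ∀ k, L k <+: L (k + 1)) : ∃ f : StLt t, ∀ k, HasPrefix f (L k) := by
  obtain ⟨f, hf⟩ := exists_limit (n := n) (A := fun k => (hL k).word) fun k i hi => by
    have hlt : i < (L k).length := by
      by_contra! hge
      obtain ⟨d, rfl⟩ := Nat.exists_eq_add_of_le hge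
      rw [(hL k).word_apply_add] at hi
      omega
    rw [(hL k).word_apply_of_lt hlt, (hL (k + 1)).word_apply_of_lt
      (hlt.trans_le (hprefix k).length_le), (hprefix k).getElem hlt]
  refine ⟨f, fun k i hi => ?_⟩
  have happly := (hL k).word_apply_of_lt hi
  rw [hf k i (happly ▸ (hL k).getElem_lt hi), happly]

end HasPrefix

/-- The values of a word in the letters `Fin t` and the variable `none`, with the value `x` for
the variable. -/
def evalAt (x : ℕ) (w : List (Option (Fin t))) : List ℕ := w.map (·.elim x Fin.val)

/-- The letter with value `n`, and the variable if there is none. -/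
def letter (t n : ℕ) : Option (Fin t) := if h : n < t then some ⟨n, h⟩ else none

section evalAt

variable {x y n : ℕ} {v w : List (Option (Fin t))}

theorem evalAt_append (x : ℕ) (v w : List (Option (Fin t))) :
    evalAt x (v ++ w) = evalAt x v ++ evalAt x w := List.map_append

theorem evalAt_cons_none (x : ℕ) (w : List (Option (Fin t))) :
    evalAt x (none :: w) = x :: evalAt x w := rfl

theorem evalAt_flatMap (x : ℕ) (l : List ℕ) (w : ℕ → List (Option (Fin t))) :
    evalAt x (l.flatMap w) = l.flatMap fun i => evalAt x (w i) := List.map_flatMap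

theorem map_evalAt (C : StLt t) (y : ℕ) (w : List (Option (Fin t))) :
    (evalAt y w).map C.1 = evalAt (C.1 y) w := by
  rw [evalAt, evalAt, List.map_map]
  refine List.map_congr_left fun o _ => ?_
  cases o with
  | none => rfl
  | some b => exact apply_of_lt C b.2

theorem evalAt_map_or_letter (hn : n < t ∨ n = x) (w : List (Option (Fin t))) :
    evalAt x (w.map (·.or (letter t n))) = evalAt n w := by
  rw [evalAt, evalAt, List.map_map]
  refine List.map_congr_left fun o _ => ?_
  cases o with
  | some b => rfl
  | none =>
    simp only [Function.comp_apply, Option.none_or, letter, Option.elim_none]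
    split_ifs with h
    · rfl
    · exact (hn.resolve_left h).symm

theorem evalAt_congr (hw : none ∉ w) : evalAt x w = evalAt y w := by
  refine List.map_congr_left fun o ho => ?_
  cases o with
  | none => exact absurd ho hw
  | some b => rfl

theorem eq_of_mem_evalAt (h : n ∈ evalAt x w) (hn : t ≤ n) : n = x := by
  obtain ⟨o, -, rfl⟩ := List.mem_map.mp h
  cases o with
  | none => rfl
  | some b => exact absurd hn (not_le.mpr b.2)

theorem mem_evalAt_of_none_mem (hw : none ∈ w) : x ∈ evalAt x w :=
  List.mem_map.mpr ⟨none, hw, rfl⟩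

theorem IsApprox.append_evalAt {L : List ℕ} (hL : IsApprox t L n) (hxn : x ≤ n) (hnx : n ≤ x + 1)
    (hw : n ≤ x → none ∈ w) : IsApprox t (L ++ evalAt x w) (x + 1) where
  base_le_length := by
    rw [List.length_append]
    exact hL.base_le_length.trans le_self_add
  fix i hi hit := by
    have hlt := hit.trans_le hL.base_le_length
    rw [List.getElem_append_left hlt, hL.fix i hlt hit]
  pairwise := by
    refine List.pairwise_append.mpr ⟨hL.pairwise, ?_, fun a ha b hb _ hbt => ?_⟩
    · exact List.pairwise_of_forall_mem_list fun a ha b hb hat hbt =>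
        (eq_of_mem_evalAt ha hat).trans_le (eq_of_mem_evalAt hb hbt).ge
    · have := (hL.mem_iff a).mp ha
      have := eq_of_mem_evalAt hb hbt
      omega
  mem_iff a := by
    have := hL.base_le
    rw [List.mem_append, hL.mem_iff]
    constructor
    · rintro (ha | ha)
      · omega
      · have := eq_of_mem_evalAt ha
        omega
    · intro ha
      by_cases han : a < n
      · exact Or.inl han
      · obtain rfl : a = x := by omega
        exact Or.inr (mem_evalAt_of_none_mem (hw (not_lt.mp han)))

end evalAt

section Pigeonhole

variable {j x : ℕ}

/-- The word `s` as an initial segment of a word fixing the values up to `x`, with `x` as the value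
of its variable. -/
def segment (x : ℕ) (s : List (Option (Fin t))) : List ℕ := List.range (x + 1) ++ evalAt x s

/-- The word `w₀` with the value `x` for its variable, followed by the words `w 0, …, w (k - 1)`
with new values for their variables. -/
def blocks (x : ℕ) (w₀ : List (Option (Fin t))) (w : ℕ → List (Option (Fin t))) (k : ℕ) : List ℕ :=
  segment x w₀ ++ (List.range k).flatMap fun i => evalAt (x + 1 + i) (w i)

theorem isApprox_segment (hx : t + j = x + 1) (s : List (Option (Fin t))) :
    IsApprox t (segment x s) (x + 1) :=
  (hx ▸ IsApprox.range t j).append_evalAt x.le_succ le_rfl fun h => absurd h (by omega)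

theorem blocks_succ (x : ℕ) (w₀ : List (Option (Fin t))) (w : ℕ → List (Option (Fin t)))
    (k : ℕ) : blocks x w₀ w (k + 1) = blocks x w₀ w k ++ evalAt (x + 1 + k) (w k) := by
  simp [blocks, List.range_succ]

theorem isApprox_blocks (hx : t + j = x + 1) (w₀ : List (Option (Fin t)))
    {w : ℕ → List (Option (Fin t))} (hw : ∀ k, none ∈ w k) (k : ℕ) :
    IsApprox t (blocks x w₀ w k) (x + 1 + k) := by
  induction k with
  | zero => simpa [blocks] using isApprox_segment hx w₀
  | succ k ih =>
    rw [blocks_succ]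
    exact ih.append_evalAt le_rfl (Nat.le_succ _) fun _ => hw k

theorem exists_hasPrefix_blocks (hx : t + j = x + 1) (w₀ : List (Option (Fin t)))
    {w : ℕ → List (Option (Fin t))} (hw : ∀ k, none ∈ w k) :
    ∃ f ∈ fixing t j, ∀ k, HasPrefix f (blocks x w₀ w k) := by
  obtain ⟨f, hf⟩ := HasPrefix.exists_of_isPrefix (isApprox_blocks hx w₀ hw)
    fun k => blocks_succ x w₀ w k ▸ List.prefix_append _ _
  refine ⟨f, HasPrefix.mem_fixing (l := evalAt x w₀) ?_, hf⟩
  rw [hx]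
  exact (hf 0).left

variable {C : StLt t}

theorem map_segment (hx : t + j = x + 1) (hC : C ∈ fixing t j) (s : List (Option (Fin t))) :
    (segment x s).map C.1 = segment x s := by
  have hrange : (List.range (x + 1)).map C.1 = List.range (x + 1) :=
    (List.map_congr_left fun i hi => hC i (hx ▸ List.mem_range.mp hi)).trans (List.map_id _)
  rw [segment, List.map_append, map_evalAt, hC x (by omega), hrange]

theorem map_blocks (hx : t + j = x + 1) (hC : C ∈ fixing t j) {k : ℕ}
    (hk : ∀ i < k, C.1 (x + 1 + i) < t ∨ C.1 (x + 1 + i) = x) (w₀ : List (Option (Fin t)))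
    (w : ℕ → List (Option (Fin t))) :
    (blocks x w₀ w k).map C.1 = segment x (w₀ ++ (List.range k).flatMap fun i =>
      (w i).map (·.or (letter t (C.1 (x + 1 + i))))) := by
  have hblock : ∀ i ∈ List.range k, (evalAt (x + 1 + i) (w i)).map C.1 =
      evalAt x ((w i).map (·.or (letter t (C.1 (x + 1 + i))))) := fun i hi => by
    rw [map_evalAt, evalAt_map_or_letter (hk i (List.mem_range.mp hi))]
  rw [blocks, List.map_append, map_segment hx hC, segment, segment, evalAt_append, evalAt_flatMap,
    List.map_flatMap, List.flatMap_congr hblock, List.append_assoc]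

theorem exists_first_occurrence (hx : t + j = x + 1) (hC : C ∈ fixing t j) :
    ∃ k, C.1 (x + 1 + k) = x + 1 ∧ ∀ i < k, C.1 (x + 1 + i) < t ∨ C.1 (x + 1 + i) = x := by
  have happrox := hasApprox_approx C (show t ≤ x + 1 by omega)
  obtain ⟨k, hk⟩ := Nat.exists_eq_add_of_le happrox.isApprox.le_length
  refine ⟨k, hk ▸ happrox.apply_length, fun i hi => or_iff_not_imp_left.mpr fun hge => ?_⟩
  have hlt : C.1 (x + 1 + i) < x + 1 := by
    rw [happrox.hasPrefix _ (by omega)]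
    exact happrox.isApprox.getElem_lt _
  have hCx : C.1 x = x := hC x (by omega)
  have := apply_mono C (show x ≤ x + 1 + i by omega) (by omega) (by omega)
  omega

theorem takeWhile_isSome_append_none_cons {α : Type*} {u : List (Option α)} (hu : none ∉ u)
    (r : List (Option α)) : (u ++ none :: r).takeWhile Option.isSome = u := by
  rw [List.takeWhile_append_of_pos fun o ho =>
    Option.isSome_iff_ne_none.mpr (ne_of_mem_of_not_mem ho hu),
    List.takeWhile_cons_of_neg (by simp), List.append_nil]

/-- The product `f * C` plugs letters and the value `x` into the variables of all blocks before the
first occurrence of `x + 1` in `C`. -/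
theorem exists_hasApprox_mul (hx : t + j = x + 1) {w₀ : List (Option (Fin t))}
    {w : ℕ → List (Option (Fin t))} (hw : ∀ k, none ∈ w k) {f : StLt t}
    (hf : ∀ k, HasPrefix f (blocks x w₀ w k)) (hC : C ∈ fixing t j) :
    ∃ (k : ℕ) (a : ℕ → Option (Fin t)), HasApprox (f * C)
      (segment x (w₀ ++ ((List.range k).flatMap fun i => (w i).map (·.or (a i))) ++
        (w k).takeWhile Option.isSome)) (x + 1) := by
  obtain ⟨k, hk, hlt⟩ := exists_first_occurrence hx hC
  obtain ⟨u, r, hwk, hu⟩ := List.eq_append_cons_of_mem (hw k)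
  refine ⟨k, fun i => letter t (C.1 (x + 1 + i)),
    HasPrefix.hasApprox (l := evalAt (x + 1) r) ?_ (isApprox_segment hx _)⟩
  have hprefix := (hf (k + 1)).mul C
  rw [blocks_succ, List.map_append, map_blocks hx hC hlt, map_evalAt, hk, hwk, evalAt_append,
    evalAt_congr (y := x) hu, evalAt_cons_none] at hprefix
  simpa only [hwk, takeWhile_isSome_append_none_cons hu, segment, evalAt_append,
      List.append_assoc] using hprefix

theorem exists_homogeneous (hx : t + j = x + 1) {S : Set (StLt t)}
    (hS : ∀ C ∈ fixing t j, ∀ h ∈ fixing t (j + 1), (C ∈ S ↔ C * h ∈ S)) :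
    ∃ f ∈ fixing t j, (∀ C ∈ fixing t j, f * C ∈ S) ∨ (∀ C ∈ fixing t j, f * C ∉ S) := by
  obtain ⟨w₀, w, hw, hhom⟩ := exists_homogeneous_variable_words fun s v : List (Option (Fin t)) =>
    (isApprox_segment hx (s ++ v.takeWhile Option.isSome)).word ∈ S
  obtain ⟨f, hf, hprefix⟩ := exists_hasPrefix_blocks hx w₀ hw
  have mem_iff : ∀ C ∈ fixing t j, ∃ (k : ℕ) (a : ℕ → Option (Fin t)), f * C ∈ S ↔
      (isApprox_segment hx (w₀ ++ ((List.range k).flatMap fun i => (w i).map (·.or (a i))) ++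
        (w k).takeWhile Option.isSome)).word ∈ S := by
    intro C hC
    obtain ⟨k, a, happrox⟩ := exists_hasApprox_mul hx hw hprefix hC
    exact ⟨k, a, happrox.mem_iff_word_mem hx hS (mul_mem hf hC)⟩
  refine ⟨f, hf, hhom.imp (fun hin C hC => ?_) fun hout C hC => ?_⟩ <;>
    obtain ⟨k, a, hiff⟩ := mem_iff C hC
  · exact hiff.mpr (hin k a)
  · exact fun hmem => hout k a (hiff.mp hmem)

theorem hasPigeonhole_fixing (t : ℕ) : HasPigeonhole (fixing t) := by
  intro j S hS
  rcases Nat.eq_zero_or_eq_succ_pred (t + j) with h₀ | hx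
  · obtain ⟨rfl, rfl⟩ : t = 0 ∧ j = 0 := by omega
    have mem_iff : ∀ C : StLt 0, 1 * C ∈ S ↔ 1 ∈ S := fun C =>
      (hS 1 (one_mem _) C fun i hi => by have := apply_le C i; omega).symm
    refine ⟨1, one_mem _, ?_⟩
    simp only [mem_iff]
    by_cases h : 1 ∈ S
    · exact Or.inl fun _ _ => h
    · exact Or.inr fun _ _ => h
  · exact exists_homogeneous hx hS

end Pigeonhole

theorem rP_of_ne_zero {n : ℕ} (hn : n ≠ 0) (A : StLt t) : rP t n A.1 = approx A (t + n) :=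
  if_neg hn

theorem hasApprox_rP {n : ℕ} (hn : n ≠ 0) (A : StLt t) : HasApprox A (rP t n A.1) (t + n) :=
  rP_of_ne_zero hn A ▸ hasApprox_approx A le_self_add

theorem rP_ne_nil {n : ℕ} (hn : n ≠ 0) (A : StLt t) : rP t n A.1 ≠ [] := fun h => by
  simpa [h, hn] using (hasApprox_rP hn A).isApprox.le_length

/-- The case `n = 0` is special because `r 0` is the empty word and not the restriction to the
positions before the first occurrence of `t`. -/
theorem isAdapted_fixing (t : ℕ) : IsAdapted (fixing t) (fun n A => rP t n A.1)
    fun n => if n = 0 then 0 else n + 1 where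
  antitone := fixing_antitone t
  le_stage n := by split_ifs <;> omega
  approx_mul n A C hC := by
    split_ifs at hC with hn
    · subst hn
      rfl
    · exact (hasApprox_rP hn _).unique ((hasApprox_rP hn A).mul hC)
  mem_of_approx_mul_eq n m A C h := by
    split_ifs with hn
    · exact mem_fixing_zero C
    have hm : m ≠ 0 := by
      rintro rfl
      exact rP_ne_nil hn A h.symm
    have hA := hasApprox_rP hn A
    have hAC : HasApprox (A * C) (rP t n A.1) (t + m) := h ▸ hasApprox_rP hm (A * C)
    obtain rfl := Nat.add_left_cancel (hAC.isApprox.unique hA.isApprox)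
    exact hA.mem_fixing hAC

end StLt

end AscendingWords

/-- **Theorem (Carlson).** For every `t < ω`, `(S_t^<(ω;ω), ≤, r)` is a
topological Ramsey space, where `A ≤ B` iff `A = B·C` for some
`C ∈ S_t^<(ω;ω)`. -/
theorem stlt_is_topological_ramsey_space (t : ℕ) :
    IsTopRamseySpace
      (fun A B : ↥(StLt t) => ∃ C ∈ StLt t, A.val = compP B.val C)
      (fun n (A : ↥(StLt t)) => rP t n A.val) := by
  have order_eq : (fun A B : StLt t => ∃ C ∈ StLt t, A.val = compP B.val C) = IsRightMultiple :=
    funext₂ fun A B => propext ⟨fun ⟨C, hC, h⟩ => ⟨⟨C, hC⟩, Subtype.ext h⟩,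
      fun ⟨C, h⟩ => ⟨C, C.2, congrArg Subtype.val h⟩⟩
  rw [order_eq]
  exact (StLt.isAdapted_fixing t).isTopRamseySpace (StLt.diagonalizes_fixing t)
    (StLt.hasPigeonhole_fixing t)
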